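/- Let k ≥ 1 be an integer, let B ⊆ S, let S' ⊆ S, and suppose X ⊆ S' with |X| ≤ k maximizes Δ(·|B) among all subsets of S' of cardinality at most k. Then for every Z ⊆ S', it holds that Δ(Z | B ∪ X) ≤ max(|Z|/k, 1)·Δ(X|B). In particular, if |Z| ≤ min(k(n−1), m) for integers n ≥ 2 and m ≥ k, then Δ(Z | B ∪ X) ≤ min(n−1, m/k)·Δ(X|B). -/

import Mathlib

open Finset

variable {α : Type*}

/-- `f` is monotone on finsets. -/
def IsMonotoneFn (f : Finset α → ℝ) : Prop := ∀ A B : Finset α, A ⊆ B → f A ≤ f B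

/-- `f` is submodular. -/
def IsSubmodularFn [DecidableEq α] (f : Finset α → ℝ) : Prop :=
  ∀ A B : Finset α, A ⊆ B → ∀ s ∉ B, f (insert s A) - f A ≥ f (insert s B) - f B

/-- Marginal contribution Δ(A|B) = f(A ∪ B) − f(B). -/
def marg [DecidableEq α] (f : Finset α → ℝ) (A B : Finset α) : ℝ := f (A ∪ B) - f B

/-- Δ^l(A|B): best marginal of a subset of `A` of size at most `l`. -/
noncomputable def margSup [DecidableEq α] (f : Finset α → ℝ) (l : ℕ) (A B : Finset α) : ℝ :=
  (A.powerset.filter (fun C => C.card ≤ l)).sup' ⟨∅, by simp⟩ (fun C => marg f C B)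

/-- Union of the first `i` sets: x_0 ∪ ⋯ ∪ x_{i-1}. -/
def pref [DecidableEq α] (x : ℕ → Finset α) (i : ℕ) : Finset α := (Finset.range i).biUnion x

/-- A nominal greedy profile. -/
def NomGreedy [DecidableEq α] (f : Finset α → ℝ) (Ss : ℕ → Finset α) (k n : ℕ)
    (x : ℕ → Finset α) : Prop :=
  ∀ i < n, x i ⊆ Ss i ∧ (x i).card ≤ k ∧
    ∀ c : Finset α, c ⊆ Ss i → c.card ≤ k → f (c ∪ pref x i) ≤ f (x i ∪ pref x i)

/-- An augmented greedy profile. -/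
def AugGreedy [DecidableEq α] (f : Finset α → ℝ) (Ss : ℕ → Finset α) (k m n : ℕ)
    (x z : ℕ → Finset α) : Prop :=
  ∀ i < n,
    (x i ⊆ Ss i ∪ pref z i ∧ (x i).card ≤ k ∧
      ∀ c : Finset α, c ⊆ Ss i ∪ pref z i → c.card ≤ k →
        f (c ∪ pref x i) ≤ f (x i ∪ pref x i)) ∧
    ∃ zk zr : Finset α,
      z i = zk ∪ zr ∧ zk ⊆ Ss i ∧ zk.card ≤ min k m ∧
      (∀ w : Finset α, w ⊆ Ss i → w.card ≤ min k m →
        marg f w (pref x (i + 1)) ≤ marg f zk (pref x (i + 1))) ∧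
      zr ⊆ Ss i ∧ zr.card ≤ m - k

/-- The optimal value OPT(f, (S_i), k) over feasible profiles with n agents. -/
noncomputable def OPTval [DecidableEq α] [Fintype α] (f : Finset α → ℝ) (Ss : ℕ → Finset α)
    (n k : ℕ) : ℝ :=
  ((Finset.univ : Finset (Fin n → Finset α)).filter
      (fun y => ∀ i : Fin n, y i ⊆ Ss (i : ℕ) ∧ (y i).card ≤ k)).sup'
    ⟨(fun _ => ∅), by simp⟩ (fun y => f (Finset.univ.biUnion (fun i => y i)))

/-!
Removing from `Z` its elements in `B ∪ X` does not change `Δ(Z | B ∪ X)`, and on sets disjoint from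
the base, marginals decrease as the base grows; so it suffices to bound `Δ(Z | B)`. The function
`Δ(· | B)` is submodular and vanishes at `∅`, so the losses from deleting each single element of `Z`
from the full set `Z` add up to at most `Δ(Z | B)`. Some element therefore costs at most the
average, and deleting such elements until `k` remain leaves `W ⊆ Z` with
`k Δ(Z | B) ≤ |Z| Δ(W | B)`.
-/

theorem marg_empty [DecidableEq α] (f : Finset α → ℝ) (B : Finset α) : marg f ∅ B = 0 := by
  simp only [marg, empty_union, sub_self]

theorem marg_sdiff_self [DecidableEq α] (f : Finset α → ℝ) (Z C : Finset α) :
    marg f (Z \ C) C = marg f Z C := by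
  simp only [marg, sdiff_union_self_eq_union]

namespace IsSubmodularFn

variable [DecidableEq α] {f : Finset α → ℝ} {B C Z : Finset α} {k : ℕ} {M : ℝ}

theorem marg_left (hf : IsSubmodularFn f) (B : Finset α) :
    IsSubmodularFn fun A => marg f A B := by
  intro A A' hA s hs
  simp only [marg, insert_union]
  by_cases hsB : s ∈ B
  · simp only [insert_eq_of_mem (mem_union_right _ hsB), sub_self, ge_iff_le, le_refl]
  · have := hf (A ∪ B) (A' ∪ B) (union_subset_union_left hA) s (by simp [hs, hsB])
    linarith

theorem marg_anti_of_disjoint (hf : IsSubmodularFn f) (hBC : B ⊆ C) (hZ : Disjoint Z C) :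
    marg f Z C ≤ marg f Z B := by
  induction Z using Finset.induction_on with
  | empty => simp only [marg_empty, le_refl]
  | insert a Z ha ih =>
    obtain ⟨haC, hZC⟩ := disjoint_insert_left.1 hZ
    have step := hf (Z ∪ B) (Z ∪ C) (union_subset_union_right hBC) a (by simp [ha, haC])
    have rest := ih hZC
    simp only [marg, insert_union] at rest ⊢
    linarith

theorem sum_sub_erase_le (hf : IsSubmodularFn f) {T : Finset α} (hT : T ⊆ Z) :
    ∑ z ∈ T, (f Z - f (Z.erase z)) ≤ f T - f ∅ := by
  induction T using Finset.induction_on with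
  | empty => simp only [sum_empty, sub_self, le_refl]
  | insert a T ha ih =>
    obtain ⟨haZ, hTZ⟩ := insert_subset_iff.1 hT
    have step := hf T (Z.erase a) (subset_erase.2 ⟨hTZ, ha⟩) a (notMem_erase a Z)
    rw [insert_erase haZ] at step
    rw [sum_insert ha]
    linarith [ih hTZ]

theorem exists_card_sub_one_mul_le_card_mul_erase (hf : IsSubmodularFn f) (h0 : 0 ≤ f ∅)
    (hZ : Z.Nonempty) : ∃ z ∈ Z, ((#Z : ℝ) - 1) * f Z ≤ #Z * f (Z.erase z) := by
  have hsum : ∑ z ∈ Z, #Z * (f Z - f (Z.erase z)) ≤ ∑ _z ∈ Z, f Z := by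
    rw [← mul_sum, sum_const, nsmul_eq_mul]
    have hle := hf.sum_sub_erase_le (Subset.refl Z)
    gcongr
    linarith
  obtain ⟨z, hz, hle⟩ := exists_le_of_sum_le hZ hsum
  exact ⟨z, hz, by linarith⟩

theorem exists_subset_card_eq_mul_le_card_mul (hf : IsSubmodularFn f) (h0 : 0 ≤ f ∅)
    (hk : 0 < k) (hkZ : k ≤ #Z) : ∃ W ⊆ Z, #W = k ∧ k * f Z ≤ #Z * f W := by
  obtain ⟨N, hN⟩ : ∃ N, #Z = N := ⟨_, rfl⟩
  rw [hN] at hkZ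
  induction N, hkZ using Nat.le_induction generalizing Z with
  | base => exact ⟨Z, Subset.refl Z, hN, by rw [hN]⟩
  | succ N hkN ih =>
    have hN0 : (0 : ℝ) < N := by exact_mod_cast hk.trans_le hkN
    obtain ⟨z, hz, hdel⟩ :=
      hf.exists_card_sub_one_mul_le_card_mul_erase h0 (card_pos.1 (by omega : 0 < #Z))
    have hcard : #(Z.erase z) = N := by rw [card_erase_of_mem hz, hN, Nat.add_sub_cancel]
    obtain ⟨W, hW, hWk, hle⟩ := ih hcard
    refine ⟨W, hW.trans (erase_subset z Z), hWk, le_of_mul_le_mul_left ?_ hN0⟩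
    rw [hcard] at hle
    rw [hN, Nat.cast_succ, add_sub_cancel_right] at hdel
    rw [hN, Nat.cast_succ]
    calc (N : ℝ) * (k * f Z) = k * (N * f Z) := by ring
      _ ≤ k * ((N + 1) * f (Z.erase z)) := by gcongr
      _ = (N + 1) * (k * f (Z.erase z)) := by ring
      _ ≤ (N + 1) * (N * f W) := by gcongr
      _ = N * ((N + 1) * f W) := by ring

theorem le_max_card_div_mul (hf : IsSubmodularFn f) (h0 : 0 ≤ f ∅) (hk : 0 < k)
    (hM : ∀ W ⊆ Z, #W ≤ k → f W ≤ M) : f Z ≤ max ((#Z : ℝ) / k) 1 * M := by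
  have hM0 : 0 ≤ M := h0.trans (hM ∅ (empty_subset Z) (by simp only [card_empty, zero_le]))
  rcases le_total #Z k with hZk | hkZ
  · calc f Z ≤ 1 * M := by simpa only [one_mul] using hM Z (Subset.refl Z) hZk
      _ ≤ max ((#Z : ℝ) / k) 1 * M := by gcongr; exact le_max_right _ _
  · obtain ⟨W, hWZ, hWk, hle⟩ := hf.exists_subset_card_eq_mul_le_card_mul h0 hk hkZ
    have hk0 : (0 : ℝ) < k := by exact_mod_cast hk
    calc f Z ≤ (#Z : ℝ) / k * f W := by
          rw [div_mul_eq_mul_div, le_div_iff₀' hk0]; exact hle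
      _ ≤ (#Z : ℝ) / k * M := by gcongr; exact hM W hWZ hWk.le
      _ ≤ max ((#Z : ℝ) / k) 1 * M := by gcongr; exact le_max_left _ _

theorem marg_le_max_card_div_mul (hf : IsSubmodularFn f) (hk : 0 < k) (hBC : B ⊆ C)
    (hM : ∀ W ⊆ Z, #W ≤ k → marg f W B ≤ M) :
    marg f Z C ≤ max ((#Z : ℝ) / k) 1 * M := by
  have hM0 : 0 ≤ M := by
    simpa only [marg_empty] using hM ∅ (empty_subset Z) (by simp only [card_empty, zero_le])
  calc marg f Z C = marg f (Z \ C) C := (marg_sdiff_self f Z C).symm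
    _ ≤ marg f (Z \ C) B := hf.marg_anti_of_disjoint hBC sdiff_disjoint
    _ ≤ max ((#(Z \ C) : ℝ) / k) 1 * M :=
      (hf.marg_left B).le_max_card_div_mul (marg_empty f B).ge hk
        fun W hW => hM W (hW.trans sdiff_subset)
    _ ≤ max ((#Z : ℝ) / k) 1 * M := by gcongr; exact sdiff_subset

end IsSubmodularFn

theorem max_div_one_le_min_sub_one_div {c k m n : ℕ} (hk : 0 < k) (hn : 2 ≤ n) (hkm : k ≤ m)
    (hc : c ≤ min (k * (n - 1)) m) :
    max ((c : ℝ) / k) 1 ≤ min ((n : ℝ) - 1) ((m : ℝ) / k) := by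
  have hk0 : (0 : ℝ) < k := by exact_mod_cast hk
  obtain ⟨hcn, hcm⟩ := le_min_iff.1 hc
  have hn1 : ((n - 1 : ℕ) : ℝ) = n - 1 := by rw [Nat.cast_sub (by omega), Nat.cast_one]
  rw [← hn1]
  refine max_le (le_min ?_ ?_) (le_min ?_ ?_)
  · rw [div_le_iff₀' hk0]
    exact_mod_cast hcn
  · gcongr
  · exact_mod_cast (by omega : 1 ≤ n - 1)
  · rw [one_le_div₀ hk0]
    exact_mod_cast hkm

theorem stmt12_general [DecidableEq α] (f : Finset α → ℝ) (hsub : IsSubmodularFn f)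
    (k : ℕ) (hk : 1 ≤ k) (B S' X : Finset α)
    (hXmax : ∀ W ⊆ S', W.card ≤ k → marg f W B ≤ marg f X B) :
    (∀ Z ⊆ S', marg f Z (B ∪ X) ≤ max ((Z.card : ℝ) / k) 1 * marg f X B) ∧
    (∀ n m : ℕ, 2 ≤ n → k ≤ m → ∀ Z ⊆ S', Z.card ≤ min (k * (n - 1)) m →
      marg f Z (B ∪ X) ≤ min ((n : ℝ) - 1) ((m : ℝ) / k) * marg f X B) := by
  have gain_nonneg : 0 ≤ marg f X B := by
    simpa only [marg_empty] using hXmax ∅ (empty_subset S') (by simp only [card_empty, zero_le])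
  have bound : ∀ Z ⊆ S', marg f Z (B ∪ X) ≤ max ((Z.card : ℝ) / k) 1 * marg f X B :=
    fun Z hZ => hsub.marg_le_max_card_div_mul hk subset_union_left
      fun W hW => hXmax W (hW.trans hZ)
  refine ⟨bound, fun n m hn hkm Z hZ hZcard => (bound Z hZ).trans ?_⟩
  exact mul_le_mul_of_nonneg_right (max_div_one_le_min_sub_one_div hk hn hkm hZcard) gain_nonneg

/-- Case m ≥ k in the proof of Theorem 2. -/
theorem stmt12 [DecidableEq α] [Fintype α] (f : Finset α → ℝ)
    (hnorm : f ∅ = 0) (hmono : IsMonotoneFn f) (hsub : IsSubmodularFn f)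
    (k : ℕ) (hk : 1 ≤ k) (B S' X : Finset α)
    (hX : X ⊆ S') (hXcard : X.card ≤ k)
    (hXmax : ∀ W ⊆ S', W.card ≤ k → marg f W B ≤ marg f X B) :
    (∀ Z ⊆ S', marg f Z (B ∪ X) ≤ max ((Z.card : ℝ) / k) 1 * marg f X B) ∧
    (∀ n m : ℕ, 2 ≤ n → k ≤ m → ∀ Z ⊆ S', Z.card ≤ min (k * (n - 1)) m →
      marg f Z (B ∪ X) ≤ min ((n : ℝ) - 1) ((m : ℝ) / k) * marg f X B) :=
  stmt12_general f hsub k hk B S' X hXmax
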